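/- arXiv:1808.04642 — 9 statements merged into one kernel-verified Lean document; each statement's English description precedes it below -/
import Mathlib

section
/- Let (W,U,N) be a polarity, ε an order type over n, and R an f-type relation with order type ε. Then for all subsets X_j ⊆ W^ε(j) (1 ≤ j ≤ n) and every Y₀ ⊆ U, the set R⁰[X̄] ⊆ U is Galois-stable, and for each 1 ≤ i ≤ n the set Rⁱ[Y₀, X̄ⁱ] ⊆ W^ε(i) is Galois-stable. (Lemma 3.4, item 1.) -/
universe u

/-- For `X ⊆ W`, `up N X = X↑ = {u ∈ U : N x u for all x ∈ X}`. -/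
def up {W U : Type u} (N : W → U → Prop) (X : Set W) : Set U := {u | ∀ x ∈ X, N x u}

/-- For `Y ⊆ U`, `dn N Y = Y↓ = {w ∈ W : N w u for all u ∈ Y}`. -/
def dn {W U : Type u} (N : W → U → Prop) (Y : Set U) : Set W := {w | ∀ u ∈ Y, N w u}

/-- A subset `X ⊆ W` is Galois-stable if `X = (X↑)↓`. -/
def stableW {W U : Type u} (N : W → U → Prop) (X : Set W) : Prop := X = dn N (up N X)

/-- A subset `Y ⊆ U` is Galois-stable if `Y = (Y↓)↑`. -/
def stableU {W U : Type u} (N : W → U → Prop) (Y : Set U) : Prop := Y = up N (dn N Y)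

/-- `coordType W U b` is `W` if `b = true` (order type 1) and `U` if `b = false` (order type ∂). -/
def coordType (W U : Type u) (b : Bool) : Type u := cond b W U

/-- `S⁰[C̄] = {a : (a, b̄) ∈ S for all b̄ ∈ C₁ × ⋯ × Cₙ}`. -/
def rel0 {A : Type u} {n : ℕ} {B : Fin n → Type u} (S : A → (∀ i, B i) → Prop)
    (C : ∀ i, Set (B i)) : Set A :=
  {a | ∀ b : ∀ i, B i, (∀ i, b i ∈ C i) → S a b}

/-- `Sⁱ[A', C̄ⁱ] = {x ∈ B i : (a, b̄ⁱ_x) ∈ S for all a ∈ A' and all b_j ∈ C_j (j ≠ i)}`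
(the `i`-th entry of `C` is ignored). -/
def reli {A : Type u} {n : ℕ} {B : Fin n → Type u} (S : A → (∀ i, B i) → Prop)
    (i : Fin n) (A' : Set A) (C : ∀ j, Set (B j)) : Set (B i) :=
  {x | ∀ a ∈ A', ∀ b : ∀ j, B j, (∀ j, j ≠ i → b j ∈ C j) → S a (Function.update b i x)}

/-- Galois-stability for a subset of `W^ε(i)` (as a subset of `W` or of `U` accordingly). -/
def coordStable {W U : Type u} (N : W → U → Prop) :
    (b : Bool) → Set (coordType W U b) → Prop
  | true, X => stableW N X
  | false, Y => stableU N Y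

/-- `R` is an f-type relation with order type `ε`: `R ⊆ U × W^ε(1) × ⋯ × W^ε(n)` such that the
sets `R⁰[{w̄}]` and `Rⁱ[{u}, {w̄}ⁱ]` are all Galois-stable. -/
def isFType {W U : Type u} (N : W → U → Prop) {n : ℕ} (ε : Fin n → Bool)
    (R : U → (∀ i, coordType W U (ε i)) → Prop) : Prop :=
  (∀ w : ∀ i, coordType W U (ε i),
    stableU N (rel0 R fun i => ({w i} : Set (coordType W U (ε i))))) ∧
  (∀ (u : U) (w : ∀ i, coordType W U (ε i)) (i : Fin n),
    coordStable N (ε i) (reli R i {u} fun j => ({w j} : Set (coordType W U (ε j)))))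

theorem stableW_iInter {W U : Type u} (N : W → U → Prop) {ι : Sort*} {F : ι → Set W}
    (hF : ∀ k, stableW N (F k)) : stableW N (⋂ k, F k) := by
  refine Set.Subset.antisymm (fun w hw v hv => hv w hw) fun w hw => Set.mem_iInter.2 fun k => ?_
  rw [hF k]
  exact fun v hv => hw v fun x hx => hv x (Set.mem_iInter.1 hx k)

theorem stableU_iInter {W U : Type u} (N : W → U → Prop) {ι : Sort*} {F : ι → Set U}
    (hF : ∀ k, stableU N (F k)) : stableU N (⋂ k, F k) := by
  refine Set.Subset.antisymm (fun v hv w hw => hw v hv) fun v hv => Set.mem_iInter.2 fun k => ?_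
  rw [hF k]
  exact fun w hw => hv w fun y hy => hw y (Set.mem_iInter.1 hy k)

theorem coordStable_iInter {W U : Type u} (N : W → U → Prop) {ι : Sort*} :
    ∀ (b : Bool) {F : ι → Set (coordType W U b)},
      (∀ k, coordStable N b (F k)) → coordStable N b (⋂ k, F k)
  | true, _, hF => stableW_iInter N hF
  | false, _, hF => stableU_iInter N hF

theorem rel0_eq_iInter {A : Type u} {n : ℕ} {B : Fin n → Type u} (S : A → (∀ i, B i) → Prop)
    (C : ∀ i, Set (B i)) :
    rel0 S C = ⋂ b : {b : ∀ i, B i // ∀ i, b i ∈ C i}, rel0 S fun i => {b.1 i} := by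
  ext a
  simp only [rel0, Set.mem_ofPred_eq, Set.mem_iInter, Set.mem_singleton_iff, Subtype.forall]
  refine ⟨fun h b hb c hc => ?_, fun h b hb => h b hb b fun _ => rfl⟩
  rw [funext hc]
  exact h b hb

theorem reli_eq_iInter {A : Type u} {n : ℕ} {B : Fin n → Type u} (S : A → (∀ i, B i) → Prop)
    (i : Fin n) (A' : Set A) (C : ∀ j, Set (B j)) :
    reli S i A' C = ⋂ p : A' × {b : ∀ j, B j // ∀ j, j ≠ i → b j ∈ C j},
      reli S i {p.1.1} fun j => {p.2.1 j} := by
  ext x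
  simp only [reli, Set.mem_ofPred_eq, Set.mem_iInter, Set.mem_singleton_iff, Prod.forall,
    Subtype.forall, forall_eq]
  refine ⟨fun h a ha b hb c hc => h a ha c fun j hj => ?_,
    fun h a ha b hb => h a ha b hb b fun _ _ => rfl⟩
  rw [hc j hj]
  exact hb j hj

/-- Lemma 3.4, item 1: for an f-type relation `R` with order type `ε`, the sets `R⁰[X̄]` and
`Rⁱ[Y₀, X̄ⁱ]` are Galois-stable for all subsets `X_j ⊆ W^ε(j)` and `Y₀ ⊆ U`. -/
theorem fType_rel_stable {W U : Type u} (N : W → U → Prop) {n : ℕ} (ε : Fin n → Bool)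
    (R : U → (∀ i, coordType W U (ε i)) → Prop) (hR : isFType N ε R)
    (X : ∀ i, Set (coordType W U (ε i))) (Y₀ : Set U) :
    stableU N (rel0 R X) ∧ ∀ i : Fin n, coordStable N (ε i) (reli R i Y₀ X) := by
  refine ⟨?_, fun i => ?_⟩
  · rw [rel0_eq_iInter]
    exact stableU_iInter N fun b => hR.1 b.1
  · rw [reli_eq_iInter]
    exact coordStable_iInter N (ε i) fun p => hR.2 p.1.1 p.2.1 i
end

section
/- Let (W,U,N) be a polarity, ε an order type over n, R an f-type relation with order type ε, and 1 ≤ i ≤ n with ε(i) = 1. Suppose that for every j ≠ i the set X_j ⊆ W^ε(j) is Galois-stable. Then for every Z ⊆ W, R⁰[X̄ⁱ_Z] = R⁰[X̄ⁱ_{(Z↑)↓}]. (Lemma 3.5, item 1(i).) -/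
universe u

/-- The Galois closure on subsets of `W^ε(i)`: `(·↑)↓` on subsets of `W`, `(·↓)↑` on subsets
of `U`. -/
def coordCl {W U : Type u} (N : W → U → Prop) :
    (b : Bool) → Set (coordType W U b) → Set (coordType W U b)
  | true, X => dn N (up N X)
  | false, Y => up N (dn N Y)

theorem subset_coordCl {W U : Type u} (N : W → U → Prop) (b : Bool)
    (Z : Set (coordType W U b)) : Z ⊆ coordCl N b Z := by
  cases b
  · exact fun z hz w hw => hw z hz
  · exact fun z hz u hu => hu z hz

theorem coordCl_subset_of_coordStable {W U : Type u} (N : W → U → Prop) (b : Bool)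
    {Z S : Set (coordType W U b)} (hS : coordStable N b S) (hZS : Z ⊆ S) :
    coordCl N b Z ⊆ S := by
  cases b
  · intro y hy
    change S = up N (dn N S) at hS
    rw [hS]
    exact fun w hw => hy w fun z hz => hw z (hZS hz)
  · intro x hx
    change S = dn N (up N S) at hS
    rw [hS]
    exact fun u hu => hx u fun z hz => hu z (hZS hz)

/-- Lemma 3.5, item 1(i): if `ε(i) = 1` and `X_j` is Galois-stable for all `j ≠ i`, then for
every `Z ⊆ W`, `R⁰[X̄ⁱ_Z] = R⁰[X̄ⁱ_{(Z↑)↓}]`. -/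
theorem fType_rel0_closure_one {W U : Type u} (N : W → U → Prop) {n : ℕ} (ε : Fin n → Bool)
    (R : U → (∀ i, coordType W U (ε i)) → Prop) (hR : isFType N ε R)
    (i : Fin n) (hi : ε i = true)
    (X : ∀ j, Set (coordType W U (ε j)))
    (hX : ∀ j, j ≠ i → coordStable N (ε j) (X j))
    (Z : Set (coordType W U (ε i))) :
    rel0 R (Function.update X i Z) = rel0 R (Function.update X i (coordCl N (ε i) Z)) := by
  ext u
  constructor
  · intro hu b hb
    have hbX : ∀ j, j ≠ i → b j ∈ X j := fun j hj => by
      simpa [Function.update_of_ne hj] using hb j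
    have hbi : b i ∈ coordCl N (ε i) Z := by simpa using hb i
    have hZ : Z ⊆ reli R i {u} fun j => {b j} := by
      rintro z hz _ rfl b' hb'
      refine hu _ fun j => ?_
      rcases eq_or_ne j i with rfl | hj
      · simpa using hz
      · have hbj : b' j = b j := hb' j hj
        simpa [Function.update_of_ne hj, hbj] using hbX j hj
    have h := coordCl_subset_of_coordStable N (ε i) (hR.2 u b i) hZ hbi u rfl b fun _ _ => rfl
    rwa [Function.update_eq_self] at h
  · intro hu b hb
    refine hu b fun j => ?_
    rcases eq_or_ne j i with rfl | hj
    · have hbj : b j ∈ Z := by simpa using hb j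
      simpa using subset_coordCl N (ε j) Z hbj
    · simpa [Function.update_of_ne hj] using hb j
end

section
/- Let (W,U,N) be a polarity, ε an order type over n, R a g-type relation with order type ε, and 1 ≤ i ≤ n with ε(i) = 1. Suppose that for every j ≠ i the set Y_j ⊆ U^ε(j) is Galois-stable. Then for every Z ⊆ U, R⁰[Ȳⁱ_Z] = R⁰[Ȳⁱ_{(Z↓)↑}]. (Lemma 3.5, item 2(i).) -/
universe u

/-- Galois-stability for a subset of `U^ε(i)` (as a subset of `U` or of `W` accordingly). -/
def coordStableG {W U : Type u} (N : W → U → Prop) :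
    (b : Bool) → Set (coordType U W b) → Prop
  | true, Y => stableU N Y
  | false, X => stableW N X

/-- `R` is a g-type relation with order type `ε`: `R ⊆ W × U^ε(1) × ⋯ × U^ε(n)` such that the
sets `R⁰[{ū}]` and `Rⁱ[{w}, {ū}ⁱ]` are all Galois-stable. -/
def isGType {W U : Type u} (N : W → U → Prop) {n : ℕ} (ε : Fin n → Bool)
    (R : W → (∀ i, coordType U W (ε i)) → Prop) : Prop :=
  (∀ v : ∀ i, coordType U W (ε i),
    stableW N (rel0 R fun i => ({v i} : Set (coordType U W (ε i))))) ∧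
  (∀ (w : W) (v : ∀ i, coordType U W (ε i)) (i : Fin n),
    coordStableG N (ε i) (reli R i {w} fun j => ({v j} : Set (coordType U W (ε j)))))

/-- The Galois closure on subsets of `U^ε(i)`: `(·↓)↑` on subsets of `U`, `(·↑)↓` on subsets
of `W`. -/
def coordClG {W U : Type u} (N : W → U → Prop) :
    (b : Bool) → Set (coordType U W b) → Set (coordType U W b)
  | true, Y => up N (dn N Y)
  | false, X => dn N (up N X)

theorem subset_coordClG {W U : Type u} (N : W → U → Prop) (b : Bool)
    (Z : Set (coordType U W b)) : Z ⊆ coordClG N b Z := by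
  cases b
  · exact fun _ hz _ hu => hu _ hz
  · exact fun _ hz _ hw => hw _ hz

theorem coordClG_subset_of_coordStableG {W U : Type u} (N : W → U → Prop) (b : Bool)
    {Z T : Set (coordType U W b)} (hT : coordStableG N b T) (h : Z ⊆ T) :
    coordClG N b Z ⊆ T := by
  intro x hx
  cases b
  · rw [show T = dn N (up N T) from hT]
    exact fun u hu => hx u fun w hw => hu w (h hw)
  · rw [show T = up N (dn N T) from hT]
    exact fun w hw => hx w fun u hu => hw u (h hu)

/-- Lemma 3.5, item 2(i): if `ε(i) = 1` and `Y_j` is Galois-stable for all `j ≠ i`, then for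
every `Z ⊆ U`, `R⁰[Ȳⁱ_Z] = R⁰[Ȳⁱ_{(Z↓)↑}]`. -/
theorem gType_rel0_closure_one {W U : Type u} (N : W → U → Prop) {n : ℕ} (ε : Fin n → Bool)
    (R : W → (∀ i, coordType U W (ε i)) → Prop) (hR : isGType N ε R)
    (i : Fin n) (hi : ε i = true)
    (Y : ∀ j, Set (coordType U W (ε j)))
    (hY : ∀ j, j ≠ i → coordStableG N (ε j) (Y j))
    (Z : Set (coordType U W (ε i))) :
    rel0 R (Function.update Y i Z) = rel0 R (Function.update Y i (coordClG N (ε i) Z)) := by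
  apply Set.Subset.antisymm
  · intro a ha b hb
    have hbi : b i ∈ coordClG N (ε i) Z := by simpa using hb i
    have hZ : Z ⊆ reli R i {a} fun j => ({b j} : Set (coordType U W (ε j))) := by
      rintro z hz _ rfl c hc
      refine ha _ fun j => ?_
      by_cases hj : j = i
      · subst hj
        simpa using hz
      · have hcj : c j = b j := hc j hj
        simpa [hj, hcj] using hb j
    have hmem := coordClG_subset_of_coordStableG N (ε i) (hR.2 a b i) hZ hbi
    simpa using hmem a rfl b fun _ _ => rfl
  · intro a ha b hb
    refine ha b fun j => ?_
    by_cases hj : j = i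
    · subst hj
      simpa using subset_coordClG N _ Z (by simpa using hb j)
    · simpa [hj] using hb j
end

section
/- Let (W,U,N) be a polarity, ε an order type over n, R an f-type relation with order type ε, and 1 ≤ i ≤ n with ε(i) = 1. Let X_j ⊆ W be Galois-stable for every j ≠ i, and let 𝒳 be any family of Galois-stable subsets of W. Then ⋁_{Z ∈ 𝒳} f_R(X̄ⁱ_Z) = f_R(X̄ⁱ_{⋁𝒳}), where ⋁𝒳 = ((⋃𝒳)↑)↓ is the join in the complete lattice of Galois-stable subsets of W. (Proposition 3.7, case f with ε(i) = 1: f_R is completely join-preserving in its i-th coordinate.) -/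
universe u

/-- The `i`-th entry of `X̄^ε`: `X_i` if `ε(i) = 1` and `X_i↑` if `ε(i) = ∂`. -/
def epsCoordF {W U : Type u} (N : W → U → Prop) :
    (b : Bool) → Set W → Set (coordType W U b)
  | true, X => X
  | false, X => up N X

/-- `f_R(X̄) := (R⁰[X̄^ε])↓`. -/
def fR {W U : Type u} (N : W → U → Prop) {n : ℕ} (ε : Fin n → Bool)
    (R : U → (∀ i, coordType W U (ε i)) → Prop) (X : Fin n → Set W) : Set W :=
  dn N (rel0 R fun i => epsCoordF N (ε i) (X i))

theorem subset_dn_up {W U : Type u} (N : W → U → Prop) (X : Set W) : X ⊆ dn N (up N X) :=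
  fun _ hw _ hu => hu _ hw

theorem up_antitone {W U : Type u} (N : W → U → Prop) : Antitone (up N) :=
  fun _ _ h _ hu x hx => hu x (h hx)

theorem dn_antitone {W U : Type u} (N : W → U → Prop) : Antitone (dn N) :=
  fun _ _ h _ hw u hu => hw u (h hu)

/-- For an f-type relation, `R⁰[C̄]` is Galois-stable for every tuple of sets `C̄`. -/
theorem isFType.stableU_rel0 {W U : Type u} {N : W → U → Prop} {n : ℕ} {ε : Fin n → Bool}
    {R : U → (∀ i, coordType W U (ε i)) → Prop} (hR : isFType N ε R)
    (C : ∀ i, Set (coordType W U (ε i))) : stableU N (rel0 R C) := by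
  refine Set.Subset.antisymm (fun u hu w hw => hw u hu) fun u hu b hb => ?_
  have hsub : rel0 R C ⊆ rel0 R fun i => ({b i} : Set (coordType W U (ε i))) := by
    intro v hv c hc
    obtain rfl : c = b := funext hc
    exact hv c hb
  have hmem := up_antitone N (dn_antitone N hsub) hu
  rw [← hR.1 b] at hmem
  exact hmem b fun _ => rfl

theorem mem_epsCoordF_sUnion {W U : Type u} (N : W → U → Prop) {b : Bool} (hb : b = true)
    (𝒳 : Set (Set W)) (x : coordType W U b) :
    x ∈ epsCoordF N b (⋃₀ 𝒳) ↔ ∃ Z ∈ 𝒳, x ∈ epsCoordF N b Z := by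
  subst hb
  exact Set.mem_sUnion

theorem epsCoordF_mono {W U : Type u} (N : W → U → Prop) {b : Bool} (hb : b = true) :
    Monotone (epsCoordF N b) := by
  subst hb
  exact fun _ _ h => h

theorem coordStable.epsCoordF_dn_up_subset {W U : Type u} {N : W → U → Prop} {b : Bool}
    (hb : b = true) {S : Set (coordType W U b)} (hS : coordStable N b S) {T : Set W}
    (hT : epsCoordF N b T ⊆ S) : epsCoordF N b (dn N (up N T)) ⊆ S := by
  subst hb
  change S = dn N (up N S) at hS
  rw [hS]
  exact dn_antitone N (up_antitone N hT)

/-- Membership in `R⁰[(X̄ⁱ_Z)^ε]`, with the `i`-th coordinate separated from the others. -/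
theorem mem_rel0_update {W U : Type u} (N : W → U → Prop) {n : ℕ} {ε : Fin n → Bool}
    (R : U → (∀ i, coordType W U (ε i)) → Prop) (i : Fin n) (X : Fin n → Set W) (Z : Set W)
    (u : U) :
    u ∈ rel0 R (fun j => epsCoordF N (ε j) (Function.update X i Z j)) ↔
      ∀ b : ∀ j, coordType W U (ε j), (∀ j, j ≠ i → b j ∈ epsCoordF N (ε j) (X j)) →
        b i ∈ epsCoordF N (ε i) Z → R u b := by
  refine forall_congr' fun b => ⟨fun h hb hbi => h fun j => ?_, fun h hb => h (fun j hj => ?_) ?_⟩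
  · rcases eq_or_ne j i with rfl | hj
    · simpa using hbi
    · simpa [hj] using hb j hj
  · simpa [hj] using hb j
  · simpa using hb i

/-- Replacing the `i`-th argument by its Galois closure does not change `R⁰`. -/
theorem isFType.rel0_update_dn_up {W U : Type u} {N : W → U → Prop} {n : ℕ} {ε : Fin n → Bool}
    {R : U → (∀ i, coordType W U (ε i)) → Prop} (hR : isFType N ε R) {i : Fin n}
    (hi : ε i = true) (X : Fin n → Set W) (T : Set W) :
    rel0 R (fun j => epsCoordF N (ε j) (Function.update X i (dn N (up N T)) j)) =
      rel0 R (fun j => epsCoordF N (ε j) (Function.update X i T j)) := by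
  ext u
  rw [mem_rel0_update, mem_rel0_update]
  refine ⟨fun h b hb hbi => h b hb (epsCoordF_mono N hi (subset_dn_up N T) hbi),
    fun h b hb hbi => ?_⟩
  have hsub : epsCoordF N (ε i) T ⊆
      reli R i {u} fun j => ({b j} : Set (coordType W U (ε j))) := by
    rintro x hx _ rfl c hc
    refine h _ (fun j hj => ?_) (by simpa using hx)
    rw [Function.update_of_ne hj, Set.mem_singleton_iff.1 (hc j hj)]
    exact hb j hj
  simpa using (hR.2 u b i).epsCoordF_dn_up_subset hi hsub hbi u rfl b fun _ _ => rfl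

/-- `R⁰` turns a union in the `i`-th argument into an intersection. -/
theorem mem_rel0_update_sUnion {W U : Type u} (N : W → U → Prop) {n : ℕ} {ε : Fin n → Bool}
    (R : U → (∀ i, coordType W U (ε i)) → Prop) {i : Fin n} (hi : ε i = true)
    (X : Fin n → Set W) (𝒳 : Set (Set W)) (u : U) :
    u ∈ rel0 R (fun j => epsCoordF N (ε j) (Function.update X i (⋃₀ 𝒳) j)) ↔
      ∀ Z ∈ 𝒳, u ∈ rel0 R (fun j => epsCoordF N (ε j) (Function.update X i Z j)) := by
  simp only [mem_rel0_update, mem_epsCoordF_sUnion N hi]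
  exact ⟨fun h Z hZ b hb hbi => h b hb ⟨Z, hZ, hbi⟩,
    fun h b hb ⟨Z, hZ, hbi⟩ => h Z hZ b hb hbi⟩

theorem mem_up_biUnion {W U : Type u} (N : W → U → Prop) {ι : Type*} (s : Set ι)
    (F : ι → Set W) (u : U) : u ∈ up N (⋃ z ∈ s, F z) ↔ ∀ z ∈ s, u ∈ up N (F z) := by
  simp only [up, Set.mem_ofPred_eq, Set.mem_iUnion]
  exact ⟨fun h z hz x hx => h x ⟨z, hz, hx⟩, fun h x ⟨z, hz, hx⟩ => h z hz x hx⟩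

/-- Proposition 3.7, case `f` with `ε(i) = 1`: `f_R` is completely join-preserving in its `i`-th
coordinate: `⋁_{Z ∈ 𝒳} f_R(X̄ⁱ_Z) = f_R(X̄ⁱ_{⋁𝒳})`, where `⋁𝒳 = ((⋃𝒳)↑)↓`. -/
theorem fR_completely_join_preserving {W U : Type u} (N : W → U → Prop) {n : ℕ}
    (ε : Fin n → Bool)
    (R : U → (∀ i, coordType W U (ε i)) → Prop) (hR : isFType N ε R)
    (i : Fin n) (hi : ε i = true)
    (X : Fin n → Set W) (hX : ∀ j, j ≠ i → stableW N (X j))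
    (𝒳 : Set (Set W)) (h𝒳 : ∀ Z ∈ 𝒳, stableW N Z) :
    dn N (up N (⋃ Z ∈ 𝒳, fR N ε R (Function.update X i Z)))
      = fR N ε R (Function.update X i (dn N (up N (⋃₀ 𝒳)))) := by
  have hup : ∀ Z : Set W, up N (fR N ε R (Function.update X i Z)) =
      rel0 R fun j => epsCoordF N (ε j) (Function.update X i Z j) :=
    fun _ => (hR.stableU_rel0 _).symm
  rw [fR, hR.rel0_update_dn_up hi]
  congr 1
  ext u
  simp only [mem_up_biUnion, hup, mem_rel0_update_sUnion N R hi]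
end

section
/- Let (W,U,N) be a polarity, ε an order type over n, R an f-type relation with order type ε, and 1 ≤ i ≤ n with ε(i) = ∂. Let X_j ⊆ W be Galois-stable for every j ≠ i, and let 𝒳 be any family of Galois-stable subsets of W. Then ⋁_{Z ∈ 𝒳} f_R(X̄ⁱ_Z) = f_R(X̄ⁱ_{⋂𝒳}), where the join on the left is computed in the complete lattice of Galois-stable subsets of W. (Proposition 3.7, case f with ε(i) = ∂: f_R turns arbitrary meets in its i-th coordinate into joins.) -/
universe u

theorem up_dn_eq_of_separated {W U : Type u} (N : W → U → Prop) {Y : Set U}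
    (hY : ∀ u ∉ Y, ∃ T, stableU N T ∧ Y ⊆ T ∧ u ∉ T) : up N (dn N Y) = Y := by
  apply Set.Subset.antisymm
  · intro u hu
    by_contra huY
    obtain ⟨T, hT, hYT, huT⟩ := hY u huY
    apply huT
    rw [hT]
    exact fun w hw => hu w fun v hv => hw v (hYT hv)
  · exact fun u hu w hw => hw u hu

theorem up_dn_rel0 {W U : Type u} (N : W → U → Prop) {n : ℕ} {ε : Fin n → Bool}
    {R : U → (∀ i, coordType W U (ε i)) → Prop} (hR : isFType N ε R)
    (C : ∀ i, Set (coordType W U (ε i))) : up N (dn N (rel0 R C)) = rel0 R C := by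
  apply up_dn_eq_of_separated
  intro u hu
  simp only [rel0, Set.mem_ofPred_eq, not_forall] at hu
  obtain ⟨w, hw, huw⟩ := hu
  refine ⟨_, hR.1 w, ?_, fun h => huw (h w fun _ => rfl)⟩
  intro v hv b hb
  obtain rfl : b = w := funext hb
  exact hv b hw

/-- Membership in `S⁰[C̄]` expressed through the sections of `S` in the `i`-th coordinate. -/
theorem mem_rel0_iff_subset_reli {A : Type u} {n : ℕ} {B : Fin n → Type u}
    (S : A → (∀ i, B i) → Prop) (i : Fin n) (C : ∀ i, Set (B i)) (a : A) :
    a ∈ rel0 S C ↔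
      ∀ b : ∀ j, B j, (∀ j, j ≠ i → b j ∈ C j) → C i ⊆ reli S i {a} fun j => {b j} := by
  constructor
  · rintro ha b hb x hx _ rfl c hc
    apply ha
    intro j
    by_cases hj : j = i
    · subst hj
      simpa using hx
    · rw [Function.update_of_ne hj, hc j hj]
      exact hb j hj
  · intro h b hb
    have := h b (fun j _ => hb j) (hb i) a rfl b fun _ _ => rfl
    rwa [Function.update_eq_self] at this

theorem epsCoordF_antitone {W U : Type u} (N : W → U → Prop) {b : Bool} (hb : b = false) :
    Antitone (epsCoordF N b) := by
  subst hb
  exact fun _ _ h _ hu x hx => hu x (h hx)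

/-- In a dual coordinate, `(⋂𝒳)↑` is the least stable set containing every `Z↑`, `Z ∈ 𝒳`. -/
theorem epsCoordF_sInter_subset_iff {W U : Type u} (N : W → U → Prop) {b : Bool}
    (hb : b = false) {𝒳 : Set (Set W)} (h𝒳 : ∀ Z ∈ 𝒳, stableW N Z)
    {C : Set (coordType W U b)} (hC : coordStable N b C) :
    epsCoordF N b (⋂₀ 𝒳) ⊆ C ↔ ∀ Z ∈ 𝒳, epsCoordF N b Z ⊆ C := by
  refine ⟨fun h Z hZ => (epsCoordF_antitone N hb (Set.sInter_subset_of_mem hZ)).trans h, ?_⟩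
  subst hb
  intro h u hu
  have hC' : C = up N (dn N C) := hC
  rw [hC']
  intro w hw
  refine hu w fun Z hZ => ?_
  rw [h𝒳 Z hZ]
  exact fun v hv => hw v (h Z hZ hv)

theorem up_iUnion_mem {W U : Type u} (N : W → U → Prop) (𝒳 : Set (Set W))
    (F : Set W → Set W) : up N (⋃ Z ∈ 𝒳, F Z) = ⋂ Z ∈ 𝒳, up N (F Z) := by
  ext u
  simp only [up, Set.mem_iUnion, Set.mem_iInter, Set.mem_ofPred_eq]
  exact ⟨fun h Z hZ x hx => h x ⟨Z, hZ, hx⟩, fun h x ⟨Z, hZ, hx⟩ => h Z hZ x hx⟩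

/-- Proposition 3.7, case `f` with `ε(i) = ∂`: `f_R` turns arbitrary meets in its `i`-th
coordinate into joins: `⋁_{Z ∈ 𝒳} f_R(X̄ⁱ_Z) = f_R(X̄ⁱ_{⋂𝒳})`. -/
theorem fR_meets_to_joins {W U : Type u} (N : W → U → Prop) {n : ℕ} (ε : Fin n → Bool)
    (R : U → (∀ i, coordType W U (ε i)) → Prop) (hR : isFType N ε R)
    (i : Fin n) (hi : ε i = false)
    (X : Fin n → Set W) (hX : ∀ j, j ≠ i → stableW N (X j))
    (𝒳 : Set (Set W)) (h𝒳 : ∀ Z ∈ 𝒳, stableW N Z) :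
    dn N (up N (⋃ Z ∈ 𝒳, fR N ε R (Function.update X i Z)))
      = fR N ε R (Function.update X i (⋂₀ 𝒳)) := by
  rw [up_iUnion_mem]
  simp only [fR, up_dn_rel0 N hR]
  congr 1
  have key (Z : Set W) (u : U) :
      u ∈ rel0 R (fun j => epsCoordF N (ε j) (Function.update X i Z j)) ↔
        ∀ w : ∀ j, coordType W U (ε j), (∀ j, j ≠ i → w j ∈ epsCoordF N (ε j) (X j)) →
          epsCoordF N (ε i) Z ⊆ reli R i {u} fun j => {w j} := by
    rw [mem_rel0_iff_subset_reli R i, Function.update_self]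
    refine forall_congr' fun w => imp_congr_left (forall₂_congr fun j hj => ?_)
    rw [Function.update_of_ne hj]
  ext u
  simp only [Set.mem_iInter, key, epsCoordF_sInter_subset_iff N hi h𝒳 (hR.2 u _ i)]
  exact ⟨fun h w hw Z hZ => h Z hZ w hw, fun h Z hZ w hw => h w hw Z hZ⟩
end

section
/- Let (W,U,N) be a polarity, ε an order type over n, R a g-type relation with order type ε, and 1 ≤ i ≤ n with ε(i) = 1. Let X_j ⊆ W be Galois-stable for every j ≠ i, and let 𝒳 be any family of Galois-stable subsets of W. Then ⋂_{Z ∈ 𝒳} g_R(X̄ⁱ_Z) = g_R(X̄ⁱ_{⋂𝒳}). (Proposition 3.7, case g with ε(i) = 1: g_R is completely meet-preserving in its i-th coordinate.) -/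
universe u

/-- The `i`-th entry of `X̄^ε`: `X_i↑` if `ε(i) = 1` and `X_i` if `ε(i) = ∂`. -/
def epsCoordG {W U : Type u} (N : W → U → Prop) :
    (b : Bool) → Set W → Set (coordType U W b)
  | true, X => up N X
  | false, X => X

/-- `g_R(X̄) := R⁰[X̄^ε]`. -/
def gR {W U : Type u} (N : W → U → Prop) {n : ℕ} (ε : Fin n → Bool)
    (R : W → (∀ i, coordType U W (ε i)) → Prop) (X : Fin n → Set W) : Set W :=
  rel0 R fun i => epsCoordG N (ε i) (X i)

theorem mem_reli_singleton {A : Type u} {n : ℕ} {B : Fin n → Type u}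
    (S : A → (∀ i, B i) → Prop) (i : Fin n) (a : A) (v : ∀ j, B j) (x : B i) :
    x ∈ reli S i {a} (fun j => {v j}) ↔ S a (Function.update v i x) := by
  refine ⟨fun h => h a rfl v fun _ _ => rfl, ?_⟩
  rintro h _ rfl b hb
  have hbv : Function.update b i x = Function.update v i x := by
    funext j
    by_cases hj : j = i
    · subst hj; simp
    · simpa [hj] using hb j hj
  rwa [hbv]

/-- Membership in `g_R` with the `i`-th argument isolated as an inclusion into sections of `R`. -/
theorem mem_gR_update_iff {W U : Type u} (N : W → U → Prop) {n : ℕ} (ε : Fin n → Bool)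
    (R : W → (∀ i, coordType U W (ε i)) → Prop) (i : Fin n) (X : Fin n → Set W)
    (Z : Set W) (w : W) :
    w ∈ gR N ε R (Function.update X i Z) ↔
      ∀ v : ∀ j, coordType U W (ε j), (∀ j, j ≠ i → v j ∈ epsCoordG N (ε j) (X j)) →
        epsCoordG N (ε i) Z ⊆ reli R i {w} fun j => {v j} := by
  constructor
  · intro h v hv x hx
    rw [mem_reli_singleton]
    refine h _ fun j => ?_
    by_cases hj : j = i
    · subst hj; simpa using hx
    · simpa [hj] using hv j hj
  · intro h v hv
    have hx : v i ∈ reli R i {w} fun j => {v j} :=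
      h v (fun j hj => by simpa [hj] using hv j) (by simpa using hv i)
    rwa [mem_reli_singleton, Function.update_eq_self] at hx

/-- A stable subset of `U` includes `(⋂ 𝒳)↑` iff it includes `Z↑` for every `Z ∈ 𝒳`. -/
theorem up_sInter_subset_iff {W U : Type u} (N : W → U → Prop) {S : Set U} (hS : stableU N S)
    {𝒳 : Set (Set W)} (h𝒳 : ∀ Z ∈ 𝒳, stableW N Z) :
    up N (⋂₀ 𝒳) ⊆ S ↔ ∀ Z ∈ 𝒳, up N Z ⊆ S := by
  constructor
  · exact fun h Z hZ u hu => h fun w hw => hu w (hw Z hZ)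
  · intro h u hu
    rw [hS]
    refine fun w hw => hu w fun Z hZ => ?_
    rw [h𝒳 Z hZ]
    exact fun u' hu' => hw u' (h Z hZ hu')

theorem epsCoordG_sInter_subset_iff {W U : Type u} (N : W → U → Prop) {b : Bool} (hb : b = true)
    {S : Set (coordType U W b)} (hS : coordStableG N b S)
    {𝒳 : Set (Set W)} (h𝒳 : ∀ Z ∈ 𝒳, stableW N Z) :
    epsCoordG N b (⋂₀ 𝒳) ⊆ S ↔ ∀ Z ∈ 𝒳, epsCoordG N b Z ⊆ S := by
  subst hb
  exact up_sInter_subset_iff N hS h𝒳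

/-- Proposition 3.7, case `g` with `ε(i) = 1`: `g_R` is completely meet-preserving in its `i`-th
coordinate: `⋂_{Z ∈ 𝒳} g_R(X̄ⁱ_Z) = g_R(X̄ⁱ_{⋂𝒳})`. -/
theorem gR_completely_meet_preserving {W U : Type u} (N : W → U → Prop) {n : ℕ}
    (ε : Fin n → Bool)
    (R : W → (∀ i, coordType U W (ε i)) → Prop) (hR : isGType N ε R)
    (i : Fin n) (hi : ε i = true)
    (X : Fin n → Set W) (hX : ∀ j, j ≠ i → stableW N (X j))
    (𝒳 : Set (Set W)) (h𝒳 : ∀ Z ∈ 𝒳, stableW N Z) :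
    (⋂ Z ∈ 𝒳, gR N ε R (Function.update X i Z))
      = gR N ε R (Function.update X i (⋂₀ 𝒳)) := by
  ext w
  simp only [Set.mem_iInter, mem_gR_update_iff]
  constructor
  · exact fun h v hv =>
      (epsCoordG_sInter_subset_iff N hi (hR.2 w v i) h𝒳).2 fun Z hZ => h Z hZ v hv
  · exact fun h Z hZ v hv =>
      (epsCoordG_sInter_subset_iff N hi (hR.2 w v i) h𝒳).1 (h v hv) Z hZ
end

section
/- Let (W,U,N) be a polarity, ε an order type over n, f : W^ε(1) × ⋯ × W^ε(n) → W a function admitting residual functions h_i as in the context, and R the relation defined by (u, w̄) ∈ R iff (f(w̄), u) ∈ N. Then for every u ∈ U and every tuple w̄: R⁰[{w̄}] = ({f(w̄)})↑, and for each 1 ≤ i ≤ n, Rⁱ[{u}, {w̄}ⁱ] equals ({h_i(w̄ⁱ,u)})↓ if ε(i) = 1 and equals ({h_i(w̄ⁱ,u)})↑ if ε(i) = ∂. In particular all these sets are Galois-stable, so R is an f-type relation with order type ε. (Content of Proposition 4.3 for functional relations with order type ε.) -/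
universe u

/-- `pairN N (ε i) w h` is `(w_i, h_i(w̄ⁱ,u)) ∈ N` if `ε(i) = 1`, and `(h_i(w̄ⁱ,u), w_i) ∈ N`
if `ε(i) = ∂`. -/
def pairN {W U : Type u} (N : W → U → Prop) :
    (b : Bool) → coordType W U b → coordType U W b → Prop
  | true, w, v => N w v
  | false, v, w => N w v

/-- The Galois-stable set `{h_i(w̄ⁱ,u)}↓` (if `ε(i) = 1`) or `{h_i(w̄ⁱ,u)}↑` (if `ε(i) = ∂`). -/
def singF {W U : Type u} (N : W → U → Prop) :
    (b : Bool) → coordType U W b → Set (coordType W U b)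
  | true, v => dn N {v}
  | false, w => up N {w}

theorem stableU_up {W U : Type u} (N : W → U → Prop) (X : Set W) : stableU N (up N X) :=
  Set.Subset.antisymm (fun _ hu _ hx => hx _ hu) fun _ hu x hx => hu x fun _ hv => hv x hx

theorem stableW_dn {W U : Type u} (N : W → U → Prop) (Y : Set U) : stableW N (dn N Y) :=
  Set.Subset.antisymm (fun _ hw _ hy => hy _ hw) fun _ hw y hy => hw y fun _ hv => hv y hy

theorem coordStable_singF {W U : Type u} (N : W → U → Prop) :
    ∀ (b : Bool) (v : coordType U W b), coordStable N b (singF N b v)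
  | true, v => stableW_dn N {v}
  | false, v => stableU_up N {v}

theorem mem_singF {W U : Type u} (N : W → U → Prop) :
    ∀ (b : Bool) (v : coordType U W b) (x : coordType W U b), x ∈ singF N b v ↔ pairN N b x v
  | true, _, _ => ⟨fun hx => hx _ rfl, fun hx _ hv => hv ▸ hx⟩
  | false, _, _ => ⟨fun hx => hx _ rfl, fun hx _ hv => hv ▸ hx⟩

theorem rel0_singleton {A : Type u} {n : ℕ} {B : Fin n → Type u} (S : A → (∀ i, B i) → Prop)
    (w : ∀ i, B i) : rel0 S (fun i => {w i}) = {a | S a w} := by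
  ext a
  exact ⟨fun ha => ha w fun _ => rfl, fun ha b hb => (funext hb : b = w) ▸ ha⟩

theorem reli_singleton {A : Type u} {n : ℕ} {B : Fin n → Type u} (S : A → (∀ i, B i) → Prop)
    (i : Fin n) (a : A) (w : ∀ i, B i) :
    reli S i {a} (fun j => {w j}) = {x | S a (Function.update w i x)} := by
  ext x
  refine ⟨fun hx => hx a rfl w fun _ _ => rfl, ?_⟩
  rintro hx _ rfl b hb
  have hbw : Function.update b i x = Function.update w i x := by
    funext j
    by_cases hj : j = i
    · subst hj
      simp
    · simpa [hj] using hb j hj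
  exact hbw ▸ hx

/-- Proposition 4.3 (functional relations, `f` case): if `f` admits residual functions `h_i`,
and `R` is defined by `(u, w̄) ∈ R iff (f(w̄), u) ∈ N`, then `R⁰[{w̄}] = ({f(w̄)})↑`,
`Rⁱ[{u}, {w̄}ⁱ] = ({h_i(w̄ⁱ,u)})↓` if `ε(i) = 1` and `= ({h_i(w̄ⁱ,u)})↑` if `ε(i) = ∂`; in
particular `R` is an f-type relation with order type `ε`. -/
theorem functional_is_fType {W U : Type u} (N : W → U → Prop) {n : ℕ} (ε : Fin n → Bool)
    (f : (∀ i, coordType W U (ε i)) → W)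
    (h : ∀ i : Fin n,
      ((∀ j : {j : Fin n // j ≠ i}, coordType W U (ε j.1)) → U → coordType U W (ε i)))
    (hres : ∀ (i : Fin n) (w : ∀ j, coordType W U (ε j)) (u : U),
      N (f w) u ↔ pairN N (ε i) (w i) (h i (fun j => w j.1) u)) :
    (∀ w : ∀ i, coordType W U (ε i),
      rel0 (fun (u : U) w' => N (f w') u)
          (fun i => ({w i} : Set (coordType W U (ε i)))) = up N {f w}) ∧
    (∀ (u : U) (w : ∀ i, coordType W U (ε i)) (i : Fin n),
      reli (fun (u' : U) w' => N (f w') u') i {u}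
          (fun j => ({w j} : Set (coordType W U (ε j))))
        = singF N (ε i) (h i (fun j => w j.1) u)) ∧
    isFType N ε (fun (u : U) w' => N (f w') u) := by
  have h0 : ∀ w : ∀ i, coordType W U (ε i),
      rel0 (fun (u : U) w' => N (f w') u)
          (fun i => ({w i} : Set (coordType W U (ε i)))) = up N {f w} := by
    intro w
    rw [rel0_singleton]
    ext u
    simp [up]
  have hi : ∀ (u : U) (w : ∀ i, coordType W U (ε i)) (i : Fin n),
      reli (fun (u' : U) w' => N (f w') u') i {u}
          (fun j => ({w j} : Set (coordType W U (ε j))))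
        = singF N (ε i) (h i (fun j => w j.1) u) := by
    intro u w i
    rw [reli_singleton]
    ext x
    have hother : (fun j : {j : Fin n // j ≠ i} => Function.update w i x j.1) =
        fun j : {j : Fin n // j ≠ i} => w j.1 :=
      funext fun j => Function.update_of_ne j.2 x w
    rw [mem_singF, Set.mem_ofPred_eq, hres i, hother, Function.update_self]
  refine ⟨h0, hi, fun w => ?_, fun u w i => ?_⟩
  · rw [h0]
    exact stableU_up N _
  · rw [hi]
    exact coordStable_singF N _ _
end

section
/- Let (W,U,N) be a polarity, ε an order type over n, and f : W^ε(1) × ⋯ × W^ε(n) → W a function admitting residual functions h_i as in the context. Let X_i, Z_i ⊆ W^ε(i) for 1 ≤ i ≤ n, and suppose X_i^∂ ⊆ Z_i^∂ for every i. Then every u ∈ U such that (f(x̄), u) ∈ N for all x̄ ∈ X₁ × ⋯ × Xₙ also satisfies (f(z̄), u) ∈ N for all z̄ ∈ Z₁ × ⋯ × Zₙ; that is, ({f(x̄) : x̄ ∈ X̄})↑ ⊆ R⁰[Z̄], where R is the relation defined by (u, w̄) ∈ R iff (f(w̄), u) ∈ N. (Lemma 4.7, item 1, for functional relations.) -/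
universe u

/-- `C^∂` for `C ⊆ W^ε(i)`: `C↑ ⊆ U` if `ε(i) = 1`, and `C↓ ⊆ W` if `ε(i) = ∂`. -/
def coordDualF {W U : Type u} (N : W → U → Prop) :
    (b : Bool) → Set (coordType W U b) → Set (coordType U W b)
  | true, X => up N X
  | false, Y => dn N Y

/-- Membership in the dual `C^∂` in terms of `pairN`, uniformly in the order type. -/
lemma mem_coordDualF_iff {W U : Type u} (N : W → U → Prop) (b : Bool)
    (C : Set (coordType W U b)) (v : coordType U W b) :
    v ∈ coordDualF N b C ↔ ∀ c ∈ C, pairN N b c v := by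
  cases b <;> rfl

/-- Lemma 4.7, item 1 (functional relations): if `f` admits residual functions `h_i` and
`X_i^∂ ⊆ Z_i^∂` for every `i`, then `({f(x̄) : x̄ ∈ X̄})↑ ⊆ R⁰[Z̄]`, where
`(u, w̄) ∈ R iff (f(w̄), u) ∈ N`. -/
theorem functional_up_image_subset_rel0 {W U : Type u} (N : W → U → Prop) {n : ℕ}
    (ε : Fin n → Bool)
    (f : (∀ i, coordType W U (ε i)) → W)
    (h : ∀ i : Fin n,
      ((∀ j : {j : Fin n // j ≠ i}, coordType W U (ε j.1)) → U → coordType U W (ε i)))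
    (hres : ∀ (i : Fin n) (w : ∀ j, coordType W U (ε j)) (u : U),
      N (f w) u ↔ pairN N (ε i) (w i) (h i (fun j => w j.1) u))
    (X Z : ∀ i, Set (coordType W U (ε i)))
    (hXZ : ∀ i, coordDualF N (ε i) (X i) ⊆ coordDualF N (ε i) (Z i)) :
    up N (f '' {x | ∀ i, x i ∈ X i}) ⊆ rel0 (fun (u : U) w => N (f w) u) Z := by
  intro u hu
  suffices key : ∀ (s : Finset (Fin n)) (w : ∀ i, coordType W U (ε i)),
      (∀ i ∈ s, w i ∈ Z i) → (∀ i ∉ s, w i ∈ X i) → N (f w) u from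
    fun z hz => key Finset.univ z (fun i _ => hz i) (fun i hi => absurd (Finset.mem_univ i) hi)
  intro s
  induction s using Finset.induction_on with
  | empty => exact fun w _ hX => hu _ ⟨w, fun i => hX i (Finset.notMem_empty i), rfl⟩
  | insert a s ha ih =>
    intro w hZ hX
    rw [hres a]
    refine (mem_coordDualF_iff N _ _ _).1 (hXZ a ?_) _ (hZ a (Finset.mem_insert_self a s))
    rw [mem_coordDualF_iff]
    intro x hx
    have hN : N (f (Function.update w a x)) u := by
      refine ih _ (fun i hi => ?_) (fun i hi => ?_)
      · have hia : i ≠ a := fun e => ha (e ▸ hi)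
        rw [Function.update_of_ne hia]
        exact hZ i (Finset.mem_insert_of_mem hi)
      · by_cases hia : i = a
        · subst hia
          rwa [Function.update_self]
        · rw [Function.update_of_ne hia]
          exact hX i (by simp [hia, hi])
    have hrest : (fun j : {j : Fin n // j ≠ a} => Function.update w a x j.1) =
        fun j : {j : Fin n // j ≠ a} => w j.1 := funext fun j => Function.update_of_ne j.2 _ _
    rwa [hres a, Function.update_self, hrest] at hN
end

section
/- Let (W,U,N) be a polarity, ε an order type over n, and g : U^ε(1) × ⋯ × U^ε(n) → U a function admitting residual functions k_i as in the context. Let Y_i, V_i ⊆ U^ε(i) for 1 ≤ i ≤ n, and suppose Y_i^∂ ⊆ V_i^∂ for every i. Then every w ∈ W such that (w, g(ȳ)) ∈ N for all ȳ ∈ Y₁ × ⋯ × Yₙ also satisfies (w, g(v̄)) ∈ N for all v̄ ∈ V₁ × ⋯ × Vₙ; that is, ({g(ȳ) : ȳ ∈ Ȳ})↓ ⊆ R⁰[V̄], where R is the relation defined by (w, ū) ∈ R iff (w, g(ū)) ∈ N. (Lemma 4.7, item 2, for functional relations.) -/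
universe u

/-- `pairNG N (ε i) u k` is `(k_i(ūⁱ,w), u_i) ∈ N` if `ε(i) = 1`, and `(u_i, k_i(ūⁱ,w)) ∈ N`
if `ε(i) = ∂`. -/
def pairNG {W U : Type u} (N : W → U → Prop) :
    (b : Bool) → coordType U W b → coordType W U b → Prop
  | true, v, w => N w v
  | false, w, v => N w v

/-- `D^∂` for `D ⊆ U^ε(i)`: `D↓ ⊆ W` if `ε(i) = 1`, and `D↑ ⊆ U` if `ε(i) = ∂`. -/
def coordDualG {W U : Type u} (N : W → U → Prop) :
    (b : Bool) → Set (coordType U W b) → Set (coordType W U b)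
  | true, Y => dn N Y
  | false, X => up N X

theorem mem_coordDualG_iff {W U : Type u} (N : W → U → Prop) (b : Bool)
    (D : Set (coordType U W b)) (x : coordType W U b) :
    x ∈ coordDualG N b D ↔ ∀ d ∈ D, pairNG N b d x := by
  cases b <;> rfl

/-- Lemma 4.7, item 2 (functional relations): if `g` admits residual functions `k_i` and
`Y_i^∂ ⊆ V_i^∂` for every `i`, then `({g(ȳ) : ȳ ∈ Ȳ})↓ ⊆ R⁰[V̄]`, where
`(w, ū) ∈ R iff (w, g(ū)) ∈ N`. -/
theorem functional_dn_image_subset_rel0 {W U : Type u} (N : W → U → Prop) {n : ℕ}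
    (ε : Fin n → Bool)
    (g : (∀ i, coordType U W (ε i)) → U)
    (k : ∀ i : Fin n,
      ((∀ j : {j : Fin n // j ≠ i}, coordType U W (ε j.1)) → W → coordType W U (ε i)))
    (hres : ∀ (i : Fin n) (v : ∀ j, coordType U W (ε j)) (w : W),
      N w (g v) ↔ pairNG N (ε i) (v i) (k i (fun j => v j.1) w))
    (Y V : ∀ i, Set (coordType U W (ε i)))
    (hYV : ∀ i, coordDualG N (ε i) (Y i) ⊆ coordDualG N (ε i) (V i)) :
    dn N (g '' {y | ∀ i, y i ∈ Y i}) ⊆ rel0 (fun (w : W) v => N w (g v)) V := by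
  intro w hw v hv
  -- Replace membership in `Y i` by membership in `V i` one coordinate at a time.
  suffices key : ∀ (s : Finset (Fin n)) (v : ∀ i, coordType U W (ε i)),
      (∀ i ∈ s, v i ∈ V i) → (∀ i ∉ s, v i ∈ Y i) → N w (g v) from
    key Finset.univ v (fun i _ => hv i) (fun i hi => absurd (Finset.mem_univ i) hi)
  intro s
  induction s using Finset.induction_on with
  | empty => exact fun v _ hY => hw _ ⟨v, fun i => hY i (Finset.notMem_empty i), rfl⟩
  | insert a s ha ih =>
    intro v hV hY
    rw [hres a]
    refine (mem_coordDualG_iff N _ _ _).1 (hYV a ?_) _ (hV a (Finset.mem_insert_self a s))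
    rw [mem_coordDualG_iff]
    intro y hy
    have hupdate : N w (g (Function.update v a y)) := by
      refine ih _ (fun i hi => ?_) (fun i hi => ?_)
      · rw [Function.update_of_ne (ne_of_mem_of_not_mem hi ha)]
        exact hV i (Finset.mem_insert_of_mem hi)
      · by_cases hia : i = a
        · subst hia
          rwa [Function.update_self]
        · rw [Function.update_of_ne hia]
          exact hY i (by simp [hia, hi])
    have hrest : (fun j : {j : Fin n // j ≠ a} => Function.update v a y j.1) =
        fun j : {j : Fin n // j ≠ a} => v j.1 :=
      funext fun j => Function.update_of_ne j.2 _ _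
    rwa [hres a, Function.update_self, hrest] at hupdate
end
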